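/- For every integer α with 5 ≤ α ≤ 9 and every nonnegative integer N, the equation αx² + (3y² − 2y) + 2(3z² − 2z) + 3(3t² − 2t) = N has an integer solution in ℤ⁴. That is, the quaternary mixed sums αx²+P₈(y)+2P₈(z)+3P₈(t) for 5 ≤ α ≤ 9 are universal. -/

import Mathlib

/-!
Completing squares, `N = α x² + P₈(y) + 2 P₈(z) + 3 P₈(t)` is solvable once some `N + 2 - α x²` is
of the form `a² + t² + 2 b²` with `3 ∤ t` and `a`, `b` not both divisible by `3`. The form
`a² + t² + 2 b²` represents `n` as soon as `2 n` is a sum of three squares, and the condition at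
`3` can then be arranged for `n ≥ 2`, `n ≢ 2 (mod 3)`: as `3 = (1 + √-2)(1 - √-2)`, a factor `9` of
`t² + 2 b²` can be traded for the square of one prime of `ℤ[√-2]` above `3`. It remains to choose a
small `x` that puts `N + 2 - α x²` into good residue classes modulo `3` and powers of `2`. When
`3 ∣ α` and `N + 2 ≡ 2 (mod 3)` no `x` does, and sums of three squares are used directly instead.

For the three-square theorem, `n` is a diagonal entry of a positive ternary form of determinant
`1`, built from a prime in a suitable arithmetic progression. Every such form is equivalent to the
sum of three squares.
-/

/-! ### Ternary forms of determinant one -/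

/-- `n` is a sum of three integer squares, zero allowed. -/
def IsSumThreeSq (n : ℤ) : Prop := ∃ u v w : ℤ, n = u ^ 2 + v ^ 2 + w ^ 2

theorem exists_two_mul_abs_add_mul_le {a : ℤ} (ha : 0 < a) (f : ℤ) :
    ∃ k : ℤ, 2 * |f + k * a| ≤ a := by
  refine ⟨-((2 * f + a) / (2 * a)), ?_⟩
  have hdiv := Int.emod_add_mul_ediv (2 * f + a) (2 * a)
  have hnonneg := Int.emod_nonneg (2 * f + a) (show 2 * a ≠ 0 by omega)
  have hlt := Int.emod_lt_of_pos (2 * f + a) (show 0 < 2 * a by omega)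
  rcases abs_cases (f + -((2 * f + a) / (2 * a)) * a) with ⟨h, -⟩ | ⟨h, -⟩ <;> rw [h] <;> linarith

theorem exists_binary_value_lt {a b f : ℤ} (ha : 0 < a) (hpos : 0 < a * b - f ^ 2)
    (hlt : 4 * (a * b - f ^ 2) < 3 * a ^ 2) :
    ∃ k : ℤ, 0 < a * k ^ 2 + 2 * f * k + b ∧ a * k ^ 2 + 2 * f * k + b < a := by
  obtain ⟨k, hk⟩ := exists_two_mul_abs_add_mul_le ha f
  have hsq : 4 * (f + k * a) ^ 2 ≤ a ^ 2 := by
    rw [← sq_abs (f + k * a)]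
    nlinarith [abs_nonneg (f + k * a)]
  have hmul : a * (a * k ^ 2 + 2 * f * k + b) = (a * b - f ^ 2) + (f + k * a) ^ 2 := by ring
  refine ⟨k, pos_of_mul_pos_right (a := a) (by rw [hmul]; positivity) ha.le, ?_⟩
  refine lt_of_mul_lt_mul_left (a := a) ?_ ha.le
  linarith

theorem eq_one_and_eq_one_of_three_mul_sq_le {a A : ℤ} (ha : 0 < a) (hA : 0 < A)
    (haA : 3 * a ^ 2 ≤ 4 * A) (hAa : 3 * A ^ 2 ≤ 4 * a) : a = 1 ∧ A = 1 := by
  rcases le_total a A with h | h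
  · have : A ≤ 1 := by nlinarith
    omega
  · have : a ≤ 1 := by nlinarith
    omega

/-- The ternary quadratic form `a x² + b y² + c z² + 2 d y z + 2 e x z + 2 f x y`, recorded by the
entries of its symmetric integer matrix. -/
structure TernaryForm where
  (a b c d e f : ℤ)

namespace TernaryForm

/-- The value of the form at `(x, y, z)`. -/
def eval (q : TernaryForm) (x y z : ℤ) : ℤ :=
  q.a * x ^ 2 + q.b * y ^ 2 + q.c * z ^ 2 + 2 * q.d * y * z + 2 * q.e * x * z + 2 * q.f * x * y

/-- The leading `2 × 2` principal minor of the matrix of the form. -/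
def minor (q : TernaryForm) : ℤ := q.a * q.b - q.f ^ 2

/-- The determinant of the matrix of the form. -/
def det (q : TernaryForm) : ℤ :=
  q.a * q.b * q.c + 2 * q.d * q.e * q.f - q.a * q.d ^ 2 - q.b * q.e ^ 2 - q.c * q.f ^ 2

/-- `n` is a value of the form at some integer point. -/
def Represents (q : TernaryForm) (n : ℤ) : Prop := ∃ x y z : ℤ, n = q.eval x y z

variable {q : TernaryForm} {n : ℤ}

theorem exists_a_lt (ha : 0 < q.a) (hminor : 0 < q.minor)
    (hlt : 4 * q.minor < 3 * q.a ^ 2) (hn : q.Represents n) :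
    ∃ r : TernaryForm, 0 < r.a ∧ r.a < q.a ∧ r.minor = q.minor ∧ r.det = q.det ∧
      r.Represents n := by
  obtain ⟨k, hpos, hk⟩ := exists_binary_value_lt ha hminor hlt
  obtain ⟨x, y, z, rfl⟩ := hn
  refine ⟨⟨q.a * k ^ 2 + 2 * q.f * k + q.b, q.a, q.c, q.e, q.d + k * q.e, q.f + k * q.a⟩,
    hpos, hk, ?_, ?_, y, x - k * y, z, ?_⟩
  · simp only [minor]; ring
  · simp only [det]; ring
  · simp only [eval]; ring

theorem exists_minor_lt (ha : 0 < q.a) (hminor : 0 < q.minor) (hdet : q.det = 1)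
    (hlt : 4 * q.a < 3 * q.minor ^ 2) (hn : q.Represents n) :
    ∃ r : TernaryForm, r.a = q.a ∧ 0 < r.minor ∧ r.minor < q.minor ∧ r.det = q.det ∧
      r.Represents n := by
  -- The lower right block of the adjugate is a binary form of determinant `a * det`.
  have hadj : q.minor * (q.a * q.c - q.e ^ 2) - (q.a * q.d - q.e * q.f) ^ 2 = q.a := by
    simp only [minor, det] at hdet ⊢
    linear_combination q.a * hdet
  obtain ⟨k, hpos, hk⟩ := exists_binary_value_lt hminor (hadj.symm ▸ ha) (hadj.symm ▸ hlt)
  obtain ⟨x, y, z, rfl⟩ := hn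
  let r : TernaryForm :=
    ⟨q.a, q.b * k ^ 2 + 2 * q.d * k + q.c, q.b, q.d + k * q.b, q.f, q.e + k * q.f⟩
  have hr : r.minor =
      q.minor * k ^ 2 + 2 * (q.a * q.d - q.e * q.f) * k + (q.a * q.c - q.e ^ 2) := by
    simp only [r, minor]; ring
  refine ⟨r, rfl, hr ▸ hpos, hr ▸ hk, ?_, x, z, y - k * z, ?_⟩
  · simp only [r, det]; ring
  · simp only [r, eval]; ring

theorem isSumThreeSq_of_a_eq_one_of_minor_eq_one (ha : q.a = 1) (hminor : q.minor = 1)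
    (hdet : q.det = 1) (hn : q.Represents n) : IsSumThreeSq n := by
  obtain ⟨x, y, z, rfl⟩ := hn
  simp only [minor, det, ha] at hminor hdet
  have hb : q.b = q.f ^ 2 + 1 := by linarith
  have hc : q.c = q.e ^ 2 + (q.d - q.e * q.f) ^ 2 + 1 := by
    rw [hb] at hdet
    linear_combination hdet
  refine ⟨x + q.f * y + q.e * z, y + (q.d - q.e * q.f) * z, z, ?_⟩
  simp only [eval, ha, hb, hc]
  ring

theorem isSumThreeSq_of_represents {q : TernaryForm} (ha : 0 < q.a) (hminor : 0 < q.minor)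
    (hdet : q.det = 1) (hn : q.Represents n) : IsSumThreeSq n := by
  by_cases hlt : 4 * q.minor < 3 * q.a ^ 2
  · obtain ⟨r, hr, hra, hrminor, hrdet, hrn⟩ := exists_a_lt ha hminor hlt hn
    have : (r.a + r.minor).toNat < (q.a + q.minor).toNat := by omega
    exact isSumThreeSq_of_represents hr (hrminor ▸ hminor) (hrdet ▸ hdet) hrn
  by_cases hlt' : 4 * q.a < 3 * q.minor ^ 2
  · obtain ⟨r, hra, hr, hrminor, hrdet, hrn⟩ := exists_minor_lt ha hminor hdet hlt' hn
    have : (r.a + r.minor).toNat < (q.a + q.minor).toNat := by omega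
    exact isSumThreeSq_of_represents (hra ▸ ha) hr (hrdet ▸ hdet) hrn
  obtain ⟨ha1, hminor1⟩ :=
    eq_one_and_eq_one_of_three_mul_sq_le ha hminor (not_lt.mp hlt) (not_lt.mp hlt')
  exact isSumThreeSq_of_a_eq_one_of_minor_eq_one ha1 hminor1 hdet hn
termination_by (q.a + q.minor).toNat
decreasing_by all_goals assumption

end TernaryForm

/-! ### The three-square theorem -/

theorem isSumThreeSq_of_dvd_sq_add {n d s : ℤ} (hd : 0 < d) (hpos : 0 < d * n - 1)
    (hs : d * n - 1 ∣ s ^ 2 + d) : IsSumThreeSq n := by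
  obtain ⟨t, ht⟩ := hs
  have ht0 : 0 < t := pos_of_mul_pos_right (ht ▸ by positivity) hpos.le
  refine TernaryForm.isSumThreeSq_of_represents (q := ⟨t, d * n - 1, n, 0, 1, s⟩) ht0 ?_ ?_
    ⟨0, 0, 1, ?_⟩
  · simp only [TernaryForm.minor]; linarith
  · simp only [TernaryForm.det]; linear_combination -n * ht
  · simp only [TernaryForm.eval]; ring

theorem exists_dvd_sq_add_of_jacobiSym_neg_eq_one {p : ℕ} (hp : p.Prime) {d : ℤ}
    (h : jacobiSym (-d) p = 1) : ∃ s : ℤ, (p : ℤ) ∣ s ^ 2 + d := by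
  have : Fact p.Prime := ⟨hp⟩
  obtain ⟨r, hr⟩ := ZMod.isSquare_of_jacobiSym_eq_one h
  obtain ⟨s, rfl⟩ := ZMod.intCast_surjective r
  refine ⟨s, (ZMod.intCast_zmod_eq_zero_iff_dvd _ p).mp ?_⟩
  push_cast at hr ⊢
  linear_combination -hr

theorem exists_two_mul_dvd_sq_add {p d : ℤ} (hp : Odd p) (hd : Odd d)
    (h : ∃ s : ℤ, p ∣ s ^ 2 + d) : ∃ s : ℤ, 2 * p ∣ s ^ 2 + d := by
  obtain ⟨s, hs⟩ := h
  obtain ⟨r, hr, hpr⟩ : ∃ r : ℤ, Odd r ∧ p ∣ r ^ 2 + d := by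
    rcases Int.even_or_odd s with hs' | hs'
    · refine ⟨s + p, hs'.add_odd hp, ?_⟩
      rw [show (s + p) ^ 2 + d = s ^ 2 + d + p * (2 * s + p) by ring]
      exact hs.add (dvd_mul_right _ _)
    · exact ⟨s, hs', hs⟩
  exact ⟨r, (Int.isCoprime_two_left.mpr hp).mul_dvd (hr.pow.add_odd hd).two_dvd hpr⟩

theorem jacobiSym_eq_one_of_mul_add_one_eq {m p d n : ℕ} (hm : jacobiSym (-m) d = 1)
    (h : m * p + 1 = d * n) : jacobiSym p d = 1 := by
  have hmod : jacobiSym (-m * p) d = jacobiSym 1 d := by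
    refine jacobiSym.mod_left' ((Int.modEq_iff_dvd).mpr ⟨n, ?_⟩)
    have : (m * p + 1 : ℤ) = d * n := mod_cast h
    linarith
  rwa [jacobiSym.mul_left, hm, one_mul, jacobiSym.one_left] at hmod

theorem jacobiSym_neg_eq_jacobiSym_swap {p d : ℕ}
    (h : p % 4 = 1 ∧ d % 2 = 1 ∨ p % 4 = 3 ∧ d % 4 = 3) : jacobiSym (-d) p = jacobiSym p d := by
  have hp : Odd p := by rw [Nat.odd_iff]; omega
  rw [jacobiSym.neg _ hp]
  rcases h with ⟨hp4, hd⟩ | ⟨hp4, hd4⟩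
  · rw [ZMod.χ₄_nat_one_mod_four hp4, one_mul,
      jacobiSym.quadratic_reciprocity_one_mod_four' (Nat.odd_iff.mpr hd) hp4]
  · rw [ZMod.χ₄_nat_three_mod_four hp4,
      jacobiSym.quadratic_reciprocity_three_mod_four hd4 hp4, neg_one_mul, neg_neg]

theorem jacobiSym_neg_one_eq_one {d : ℕ} (hd : d % 4 = 1) : jacobiSym (-1) d = 1 := by
  rw [jacobiSym.at_neg_one (Nat.odd_iff.mpr (by omega)), ZMod.χ₄_nat_one_mod_four hd]

theorem jacobiSym_neg_two_eq_one {d : ℕ} (hd : d % 8 = 1 ∨ d % 8 = 3) :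
    jacobiSym (-2) d = 1 := by
  rw [jacobiSym.at_neg_two (Nat.odd_iff.mpr (by omega)), ZMod.χ₈'_nat_eq_if_mod_eight,
    if_neg (by omega), if_pos hd]

theorem exists_prime_mul_add_one_eq {m k c n : ℕ} (hk : Odd k) (h : m * k + 1 = c * n) :
    ∃ p d : ℕ, p.Prime ∧ p % 4 = k % 4 ∧ d % (4 * m) = c % (4 * m) ∧ m * p + 1 = d * n := by
  have hn : n ≠ 0 := by rintro rfl; omega
  have hcoprime : k.Coprime (4 * n) := by
    refine Nat.Coprime.mul_right ((Nat.coprime_two_right.mpr hk).pow_right 2) ?_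
    refine Nat.isCoprime_iff_coprime.mp ⟨-m, c, ?_⟩
    have : (m * k + 1 : ℤ) = c * n := mod_cast h
    linarith
  obtain ⟨p, hkp, hp, hmod⟩ :=
    Nat.forall_exists_prime_gt_and_modEq k (by omega : 4 * n ≠ 0) hcoprime
  obtain ⟨j, hj⟩ := (Nat.modEq_iff_dvd' hkp.le).mp hmod.symm
  have hpj : p = 4 * n * j + k := by omega
  refine ⟨p, 4 * m * j + c, hp, by rw [hpj, mul_assoc]; omega, Nat.mul_add_mod _ _ _, ?_⟩
  calc m * p + 1 = 4 * m * j * n + (m * k + 1) := by rw [hpj]; ring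
    _ = (4 * m * j + c) * n := by rw [h]; ring

theorem isSumThreeSq_of_mul_add_one_eq {m k c n : ℕ} (hm : m = 1 ∨ m = 2)
    (h : m * k + 1 = c * n) (hkc : k % 4 = 1 ∧ c % 2 = 1 ∨ k % 4 = 3 ∧ c % 4 = 3)
    (hjacobi : ∀ d : ℕ, d % (4 * m) = c % (4 * m) → jacobiSym (-m) d = 1) :
    IsSumThreeSq n := by
  obtain ⟨p, d, hp, hpk, hdc, hpd⟩ := exists_prime_mul_add_one_eq (Nat.odd_iff.mpr (by omega)) h
  have hd4 : d % 4 = c % 4 := by rcases hm with rfl | rfl <;> omega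
  have hneg : jacobiSym (-d) p = 1 := by
    rw [jacobiSym_neg_eq_jacobiSym_swap (by omega)]
    exact jacobiSym_eq_one_of_mul_add_one_eq (hjacobi d hdc) hpd
  obtain ⟨s, hs⟩ : ∃ s : ℤ, (m * p : ℤ) ∣ s ^ 2 + d := by
    have hdvd := exists_dvd_sq_add_of_jacobiSym_neg_eq_one hp hneg
    rcases hm with rfl | rfl
    · simpa only [Nat.cast_one, one_mul] using hdvd
    · have hp_odd : Odd p := Nat.odd_iff.mpr (by omega)
      have hd_odd : Odd d := Nat.odd_iff.mpr (by omega)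
      exact exists_two_mul_dvd_sq_add (mod_cast hp_odd) (mod_cast hd_odd) hdvd
  have hmp : (m * p : ℤ) = d * n - 1 := eq_sub_of_add_eq (mod_cast hpd)
  have hmp_pos : 0 < m * p := mul_pos (by omega) hp.pos
  have hd_pos : 0 < d := by omega
  exact isSumThreeSq_of_dvd_sq_add (mod_cast hd_pos) (hmp ▸ mod_cast hmp_pos) (hmp ▸ hs)

theorem isSumThreeSq_of_emod_ne {n : ℤ} (hn : 0 ≤ n) (hn4 : n % 4 ≠ 0) (hn8 : n % 8 ≠ 7) :
    IsSumThreeSq n := by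
  lift n to ℕ using hn
  have hcases : n % 4 = 2 ∨ n % 8 = 3 ∨ n % 8 = 1 ∨ n % 8 = 5 := by omega
  rcases hcases with hn | hn | hn
  · exact isSumThreeSq_of_mul_add_one_eq (m := 1) (k := n - 1) (c := 1) (.inl rfl)
      (by omega) (.inl ⟨by omega, rfl⟩) fun d hd => jacobiSym_neg_one_eq_one (by omega)
  · exact isSumThreeSq_of_mul_add_one_eq (m := 2) (k := (n - 1) / 2) (c := 1) (.inr rfl)
      (by omega) (.inl ⟨by omega, rfl⟩) fun d hd => jacobiSym_neg_two_eq_one (by omega)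
  · exact isSumThreeSq_of_mul_add_one_eq (m := 2) (k := (3 * n - 1) / 2) (c := 3) (.inr rfl)
      (by omega) (by omega) fun d hd => jacobiSym_neg_two_eq_one (by omega)

theorem IsSumThreeSq.four_mul {n : ℤ} (h : IsSumThreeSq n) : IsSumThreeSq (4 * n) := by
  obtain ⟨u, v, w, rfl⟩ := h
  exact ⟨2 * u, 2 * v, 2 * w, by ring⟩

/-! ### Consequences for other ternary forms -/

theorem IsSumThreeSq.exists_last {n : ℤ} {P : ℤ → Prop} (h : IsSumThreeSq n)
    (hP : ∀ u v w : ℤ, n = u ^ 2 + v ^ 2 + w ^ 2 → P u ∨ P v ∨ P w) :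
    ∃ u v w : ℤ, n = u ^ 2 + v ^ 2 + w ^ 2 ∧ P w := by
  obtain ⟨u, v, w, h⟩ := h
  rcases hP u v w h with hu | hv | hw
  · exact ⟨v, w, u, by linarith, hu⟩
  · exact ⟨u, w, v, by linarith, hv⟩
  · exact ⟨u, v, w, h, hw⟩

theorem IsSumThreeSq.exists_eq_sq_add_sq_add_two_mul_sq {n : ℤ} (h : IsSumThreeSq (2 * n)) :
    ∃ a b c : ℤ, n = a ^ 2 + b ^ 2 + 2 * c ^ 2 := by
  obtain ⟨u, v, w, h, hw⟩ : ∃ u v w : ℤ, 2 * n = u ^ 2 + v ^ 2 + w ^ 2 ∧ Even w := by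
    refine h.exists_last fun u v w h => ?_
    have heven : Even (u ^ 2 + v ^ 2 + w ^ 2) := ⟨n, by linarith⟩
    simp only [Int.even_add, Int.even_pow] at heven
    tauto
  have huv : Even (u + v) := by
    have heven : Even (u ^ 2 + v ^ 2 + w ^ 2) := ⟨n, by linarith⟩
    simp only [Int.even_add, Int.even_pow] at heven ⊢
    tauto
  obtain ⟨c, rfl⟩ := hw
  obtain ⟨a, ha⟩ := huv
  obtain rfl : u = a + a - v := by linarith
  exact ⟨a, a - v, c, by linarith⟩

theorem three_dvd_or_sq_emod_three_eq_one (v : ℤ) :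
    3 ∣ v ∧ 9 ∣ v ^ 2 ∨ ¬ 3 ∣ v ∧ v ^ 2 % 3 = 1 := by
  by_cases h : 3 ∣ v
  · exact .inl ⟨h, pow_dvd_pow_of_dvd h 2⟩
  · refine .inr ⟨h, ?_⟩
    have hv : v % 3 = 1 ∨ v % 3 = 2 := by omega
    rcases hv with hv | hv <;> rw [pow_two, Int.mul_emod, hv] <;> rfl

theorem exists_sq_eq_three_mul_sub_one_sq {v : ℤ} (h : ¬ 3 ∣ v) :
    ∃ y : ℤ, v ^ 2 = (3 * y - 1) ^ 2 := by
  have hv : v % 3 = 1 ∨ v % 3 = 2 := by omega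
  rcases hv with hv | hv
  · refine ⟨-v / 3 + 1, ?_⟩
    rw [← neg_sq v]
    congr 1
    omega
  · exact ⟨(v + 1) / 3, by congr 1; omega⟩

theorem IsSumThreeSq.exists_eq_sq_add_sq_add_nine_mul_sq {n : ℤ} (h : IsSumThreeSq n)
    (hn : n % 3 = 2) :
    ∃ u v x : ℤ, n = u ^ 2 + v ^ 2 + 9 * x ^ 2 ∧ ¬ 3 ∣ u ∧ ¬ 3 ∣ v := by
  obtain ⟨u, v, w, h, x, rfl⟩ : ∃ u v w : ℤ, n = u ^ 2 + v ^ 2 + w ^ 2 ∧ 3 ∣ w := by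
    refine h.exists_last fun u v w h => ?_
    have := three_dvd_or_sq_emod_three_eq_one u
    have := three_dvd_or_sq_emod_three_eq_one v
    have := three_dvd_or_sq_emod_three_eq_one w
    omega
  have hn : n = u ^ 2 + v ^ 2 + 9 * x ^ 2 := by rw [h]; ring
  have := three_dvd_or_sq_emod_three_eq_one u
  have := three_dvd_or_sq_emod_three_eq_one v
  exact ⟨u, v, x, hn, by omega, by omega⟩

theorem IsSumThreeSq.exists_eq_sq_add_six_mul_sq_add_eighteen_mul_sq {m : ℤ}
    (h : IsSumThreeSq (3 * m)) (hm : m % 3 = 1) :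
    ∃ a x b : ℤ, m = a ^ 2 + 6 * x ^ 2 + 18 * b ^ 2 ∧ ¬ 3 ∣ a := by
  obtain ⟨u, v, w, h⟩ := h
  obtain ⟨hu, hv, hw⟩ : ¬ 3 ∣ u ∧ ¬ 3 ∣ v ∧ ¬ 3 ∣ w := by
    have := three_dvd_or_sq_emod_three_eq_one u
    have := three_dvd_or_sq_emod_three_eq_one v
    have := three_dvd_or_sq_emod_three_eq_one w
    omega
  obtain ⟨i, hi⟩ := exists_sq_eq_three_mul_sub_one_sq hu
  obtain ⟨j, hj⟩ := exists_sq_eq_three_mul_sub_one_sq hv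
  obtain ⟨k, hk⟩ := exists_sq_eq_three_mul_sub_one_sq hw
  obtain ⟨i, j, k, hijk, x, hx⟩ : ∃ i j k : ℤ,
      m = 3 * (i ^ 2 + j ^ 2 + k ^ 2) - 2 * (i + j + k) + 1 ∧ 2 ∣ i - j := by
    have hparity : 2 ∣ i - j ∨ 2 ∣ i - k ∨ 2 ∣ j - k := by omega
    rcases hparity with hij | hik | hjk
    · exact ⟨i, j, k, by linarith, hij⟩
    · exact ⟨i, k, j, by linarith, hik⟩
    · exact ⟨j, k, i, by linarith, hjk⟩
  have hsum : 3 ∣ i + j + k := by omega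
  obtain ⟨b, hb⟩ : ∃ b, k = j + x - 3 * b := ⟨(j + x - k) / 3, by omega⟩
  obtain rfl : i = j + 2 * x := by linarith
  -- `3 (u² + v² + w²) = (u + v + w)² + 3 (u - v)² / 2 + (u + v - 2 w)² / 2`
  refine ⟨j + 2 * x + j + k - 1, x, b, ?_, by omega⟩
  rw [hijk, hb]
  ring

theorem exists_prime_sq_eq_sq_add_sq_add_two_mul_sq {p : ℕ} (hp : p.Prime) :
    ∃ a b c : ℤ, (p : ℤ) ^ 2 = a ^ 2 + b ^ 2 + 2 * c ^ 2 ∧ a ≠ 0 ∧ (b ≠ 0 ∨ c ≠ 0) := by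
  rcases hp.eq_two_or_odd with rfl | hodd
  · exact ⟨1, 1, 1, by norm_num⟩
  have hrep : IsSumThreeSq (2 * p) := isSumThreeSq_of_emod_ne (by omega) (by omega) (by omega)
  obtain ⟨a, b, c, hb, h⟩ : ∃ a b c : ℤ, b ≠ 0 ∧ (p : ℤ) = a ^ 2 + b ^ 2 + 2 * c ^ 2 := by
    obtain ⟨a, b, c, h⟩ := hrep.exists_eq_sq_add_sq_add_two_mul_sq
    by_cases hb : b = 0
    · refine ⟨b, a, c, ?_, by linarith⟩
      rintro rfl
      rw [hb] at h
      omega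
    · exact ⟨a, b, c, hb, h⟩
  have hac : a ≠ 0 ∨ c ≠ 0 := by
    by_contra! hac
    refine (Nat.prime_iff_prime_int.mp hp).not_isSquare ⟨b, ?_⟩
    rw [h, hac.1, hac.2]
    ring
  -- `(X + b²)² = (X - b²)² + 4 b² X` with `X = a² + 2 c²`
  refine ⟨p - 2 * b ^ 2, 2 * (a * b), 2 * (b * c), ?_, by omega, ?_⟩
  · rw [h]
    ring
  · simpa [hb] using hac

theorem exists_sq_eq_sq_add_sq_add_two_mul_sq {m : ℤ} (hm : 2 ≤ m ^ 2) :
    ∃ a b c : ℤ, m ^ 2 = a ^ 2 + b ^ 2 + 2 * c ^ 2 ∧ a ≠ 0 ∧ (b ≠ 0 ∨ c ≠ 0) := by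
  have hm1 : m.natAbs ≠ 1 := by
    intro h
    rw [← Int.natAbs_sq, h] at hm
    norm_num at hm
  obtain ⟨p, hp, k, hk⟩ := Nat.exists_prime_and_dvd hm1
  have hk0 : k ≠ 0 := by rintro rfl; simp_all
  obtain ⟨a, b, c, h, ha, hbc⟩ := exists_prime_sq_eq_sq_add_sq_add_two_mul_sq hp
  refine ⟨k * a, k * b, k * c, ?_, by simp [hk0, ha], by simpa [hk0] using hbc⟩
  rw [← Int.natAbs_sq, hk]
  push_cast
  linear_combination (k : ℤ) ^ 2 * h

-- The witnesses are, up to sign, the coordinates of `(1 ± √-2)² (t + b √-2)`.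
theorem exists_nine_mul_sq_add_two_mul_sq_eq_of_not_three_dvd {t b : ℤ} (h : ¬ (3 ∣ t ∧ 3 ∣ b)) :
    ∃ r s : ℤ, 9 * (t ^ 2 + 2 * b ^ 2) = r ^ 2 + 2 * s ^ 2 ∧ ¬ 3 ∣ r ∧ ¬ 3 ∣ s := by
  by_cases htb : 3 ∣ t + b
  · exact ⟨-t + 4 * b, 2 * t + b, by ring, by omega, by omega⟩
  · exact ⟨-t - 4 * b, 2 * t - b, by ring, by omega, by omega⟩

theorem exists_nine_mul_sq_add_two_mul_sq_eq {t b : ℤ} (h : t ≠ 0 ∨ b ≠ 0) :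
    ∃ r s : ℤ, 9 * (t ^ 2 + 2 * b ^ 2) = r ^ 2 + 2 * s ^ 2 ∧ ¬ 3 ∣ r ∧ ¬ 3 ∣ s := by
  by_cases hdvd : 3 ∣ t ∧ 3 ∣ b
  · obtain ⟨⟨t', rfl⟩, b', rfl⟩ := hdvd
    obtain ⟨r, s, hrs, hr, -⟩ := exists_nine_mul_sq_add_two_mul_sq_eq (t := t') (b := b') (by omega)
    obtain ⟨r', s', hrs', h'⟩ :=
      exists_nine_mul_sq_add_two_mul_sq_eq_of_not_three_dvd (b := s) (not_and_of_not_left _ hr)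
    exact ⟨r', s', by rw [← hrs', ← hrs]; ring, h'⟩
  · exact exists_nine_mul_sq_add_two_mul_sq_eq_of_not_three_dvd hdvd
termination_by t.natAbs + b.natAbs

/-! ### Sums of octagonal numbers -/

/-- `n = a² + t² + 2 b²` where `3` does not divide `t` and does not divide both of `a` and `b`.
Up to the sign of `b` the last condition makes `a + 2 b` and `a - b` prime to `3`, and these satisfy
`(a + 2 b)² + 2 (a - b)² = 3 (a² + 2 b²)`. Since `3 P₈(u) = (3 u - 1)² - 1`, such `n` are the
integers `P₈(u) + 2 P₈(v) + 3 P₈(w) + 2`. -/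
def IsAdmissible (n : ℤ) : Prop :=
  ∃ a t b : ℤ, n = a ^ 2 + t ^ 2 + 2 * b ^ 2 ∧ ¬ 3 ∣ t ∧ ¬ (3 ∣ a ∧ 3 ∣ b)

namespace IsAdmissible

theorem exists_octagonal_sum {n : ℤ} (h : IsAdmissible (n + 2)) :
    ∃ y z t : ℤ, (3 * y ^ 2 - 2 * y) + 2 * (3 * z ^ 2 - 2 * z) + 3 * (3 * t ^ 2 - 2 * t) = n := by
  obtain ⟨a, t, b, h, ht, hab⟩ := h
  obtain ⟨b, h, hab⟩ : ∃ b' : ℤ, n + 2 = a ^ 2 + t ^ 2 + 2 * b' ^ 2 ∧ ¬ 3 ∣ a - b' := by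
    by_cases hdvd : 3 ∣ a - b
    · exact ⟨-b, by rw [h]; ring, by omega⟩
    · exact ⟨b, h, hdvd⟩
  obtain ⟨y, hy⟩ := exists_sq_eq_three_mul_sub_one_sq (v := a + 2 * b) (by omega)
  obtain ⟨z, hz⟩ := exists_sq_eq_three_mul_sub_one_sq hab
  obtain ⟨t, ht⟩ := exists_sq_eq_three_mul_sub_one_sq ht
  exact ⟨y, z, t, by linarith⟩

theorem four_mul {n : ℤ} (h : IsAdmissible n) : IsAdmissible (4 * n) := by
  obtain ⟨a, t, b, rfl, ht, hab⟩ := h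
  exact ⟨2 * a, 2 * t, 2 * b, by ring, by omega, by omega⟩

theorem of_three_dvd {a t b : ℤ} (htb : t ≠ 0 ∨ b ≠ 0) (ht : 3 ∣ t) (hb : 3 ∣ b) :
    IsAdmissible (a ^ 2 + t ^ 2 + 2 * b ^ 2) := by
  obtain ⟨t, rfl⟩ := ht
  obtain ⟨b, rfl⟩ := hb
  obtain ⟨r, s, h, hr, hs⟩ := exists_nine_mul_sq_add_two_mul_sq_eq (t := t) (b := b) (by omega)
  exact ⟨a, r, s, by linarith, hr, fun h => hs h.2⟩

theorem of_nontrivial {a t b : ℤ} (hmod : (a ^ 2 + t ^ 2 + 2 * b ^ 2) % 3 ≠ 2)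
    (htb : t ≠ 0 ∨ b ≠ 0) (hab : a ≠ 0 ∨ b ≠ 0) : IsAdmissible (a ^ 2 + t ^ 2 + 2 * b ^ 2) := by
  have ha3 := three_dvd_or_sq_emod_three_eq_one a
  have ht3 := three_dvd_or_sq_emod_three_eq_one t
  have hb3 := three_dvd_or_sq_emod_three_eq_one b
  by_cases hb : 3 ∣ b
  · by_cases ht : 3 ∣ t
    · exact of_three_dvd htb ht hb
    · rw [add_comm (a ^ 2)]
      exact of_three_dvd hab (by omega) hb
  · by_cases ht : 3 ∣ t
    · exact ⟨t, a, b, by ring, by omega, by omega⟩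
    · exact ⟨a, t, b, rfl, ht, by omega⟩

theorem of_sq {m : ℤ} (hm : 2 ≤ m ^ 2) : IsAdmissible (m ^ 2) := by
  have hmod : m ^ 2 % 3 ≠ 2 := by
    have := three_dvd_or_sq_emod_three_eq_one m
    omega
  obtain ⟨a, b, c, h, ha, hbc⟩ := exists_sq_eq_sq_add_sq_add_two_mul_sq hm
  rw [h] at hmod ⊢
  exact of_nontrivial hmod hbc (.inl ha)

theorem of_isSumThreeSq_two_mul {n : ℤ} (hn : 2 ≤ n) (hmod : n % 3 ≠ 2)
    (h : IsSumThreeSq (2 * n)) : IsAdmissible n := by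
  obtain ⟨a, t, b, rfl⟩ := h.exists_eq_sq_add_sq_add_two_mul_sq
  by_cases htb : t = 0 ∧ b = 0
  · obtain ⟨rfl, rfl⟩ := htb
    simpa using of_sq (m := a) (by simpa using hn)
  by_cases hab : a = 0 ∧ b = 0
  · obtain ⟨rfl, rfl⟩ := hab
    simpa using of_sq (m := t) (by simpa using hn)
  · exact of_nontrivial hmod (by omega) (by omega)

theorem of_odd {n : ℤ} (hn : 2 ≤ n) (hodd : n % 2 = 1) (hmod : n % 3 ≠ 2) : IsAdmissible n :=
  of_isSumThreeSq_two_mul hn hmod (isSumThreeSq_of_emod_ne (by omega) (by omega) (by omega))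

theorem two_mul {k : ℤ} (hk : 1 ≤ k) (hk3 : k % 3 ≠ 1) (hk4 : k % 4 ≠ 0) (hk8 : k % 8 ≠ 7) :
    IsAdmissible (2 * k) := by
  refine of_isSumThreeSq_two_mul (by omega) (by omega) ?_
  rw [show 2 * (2 * k) = 4 * k by ring]
  exact (isSumThreeSq_of_emod_ne (by omega) hk4 hk8).four_mul

end IsAdmissible

theorem exists_isAdmissible_sub_mul_sq_of_coprime_six {α n : ℤ} (hα : 0 < α) (hα2 : ¬ 2 ∣ α)
    (hα3 : ¬ 3 ∣ α) (hn : 9 * α + 2 ≤ n) : ∃ x : ℤ, IsAdmissible (n - α * x ^ 2) := by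
  rcases Int.emod_two_eq_zero_or_one n with hn2 | hn2 <;> by_cases hn3 : n % 3 = 2
  · exact ⟨1, .of_odd (by omega) (by omega) (by omega)⟩
  · exact ⟨3, .of_odd (by omega) (by omega) (by omega)⟩
  · exact ⟨2, .of_odd (by omega) (by omega) (by omega)⟩
  · exact ⟨0, .of_odd (by omega) (by omega) (by omega)⟩

theorem exists_isAdmissible_sub_mul_sq_of_lt {α n : ℤ} (hα : 5 ≤ α) (hα' : α ≤ 9) (hn : 2 ≤ n)
    (hn' : n < 65) : ∃ x : ℤ, IsAdmissible (n - α * x ^ 2) := by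
  have htable : ∀ α ∈ Finset.Icc 5 9, ∀ n ∈ Finset.Icc 2 64, ∃ x < 3, ∃ a < 8, ∃ t < 8, ∃ b < 6,
      n = α * x ^ 2 + a ^ 2 + t ^ 2 + 2 * b ^ 2 ∧ ¬ 3 ∣ t ∧ ¬ (3 ∣ a ∧ 3 ∣ b) := by
    decide +kernel
  lift α to ℕ using by omega
  lift n to ℕ using by omega
  obtain ⟨x, -, a, -, t, -, b, -, h, ht, hab⟩ :=
    htable α (Finset.mem_Icc.mpr (by omega)) n (Finset.mem_Icc.mpr (by omega))
  refine ⟨x, a, t, b, ?_, by omega, by omega⟩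
  rw [h]
  push_cast
  ring

theorem exists_isAdmissible_sub_six_mul_sq_of_emod_three_eq_two {n : ℤ} (hn : 16 ≤ n)
    (hn3 : n % 3 = 2) : ∃ x : ℤ, IsAdmissible (n - 6 * x ^ 2) := by
  obtain ⟨t, ht, htn, hmod3, hmod4, hmod8⟩ : ∃ t : ℤ, ¬ 3 ∣ t ∧ 0 ≤ n - t ^ 2 ∧
      (n - t ^ 2) % 3 = 1 ∧ (n - t ^ 2) % 4 ≠ 0 ∧ (n - t ^ 2) % 8 ≠ 5 := by
    have hcases : n % 8 = 1 ∨ (n % 8 = 5 ∨ n % 8 = 6) ∨ (n % 4 ≠ 1 ∧ n % 8 ≠ 6) := by omega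
    rcases hcases with h | h | h
    · exact ⟨4, by omega⟩
    · exact ⟨2, by omega⟩
    · exact ⟨1, by omega⟩
  have hsum : IsSumThreeSq (3 * (n - t ^ 2)) :=
    isSumThreeSq_of_emod_ne (by omega) (by omega) (by omega)
  obtain ⟨a, x, b, h, ha⟩ := hsum.exists_eq_sq_add_six_mul_sq_add_eighteen_mul_sq hmod3
  exact ⟨x, a, t, 3 * b, by linear_combination h, ht, fun h => ha h.1⟩

theorem exists_isAdmissible_sub_six_mul_sq {n : ℤ} (hn : 26 ≤ n) :
    ∃ x : ℤ, IsAdmissible (n - 6 * x ^ 2) := by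
  by_cases hn3 : n % 3 = 2
  · exact exists_isAdmissible_sub_six_mul_sq_of_emod_three_eq_two (by omega) hn3
  rcases Int.emod_two_eq_zero_or_one n with hn2 | hn2
  · obtain ⟨k, rfl⟩ : 2 ∣ n := Int.dvd_of_emod_eq_zero hn2
    obtain ⟨x, hpos, hmod3, hmod4, hmod8⟩ : ∃ x : ℤ, 1 ≤ k - 3 * x ^ 2 ∧
        (k - 3 * x ^ 2) % 3 ≠ 1 ∧ (k - 3 * x ^ 2) % 4 ≠ 0 ∧ (k - 3 * x ^ 2) % 8 ≠ 7 := by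
      have hcases : (k % 4 ≠ 0 ∧ k % 8 ≠ 7) ∨ k % 4 = 0 ∨ k % 8 = 7 := by omega
      rcases hcases with h | h | h
      · exact ⟨0, by omega⟩
      · exact ⟨1, by omega⟩
      · exact ⟨2, by omega⟩
    refine ⟨x, ?_⟩
    rw [show 2 * k - 6 * x ^ 2 = 2 * (k - 3 * x ^ 2) by ring]
    exact .two_mul hpos hmod3 hmod4 hmod8
  · exact ⟨0, .of_odd (by omega) (by omega) (by omega)⟩

theorem exists_isAdmissible_sub_eight_mul_sq_of_emod_four_eq_two {n : ℤ} (hn : 65 ≤ n)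
    (hn4 : n % 4 = 2) : ∃ x : ℤ, IsAdmissible (n - 8 * x ^ 2) := by
  obtain ⟨k, rfl⟩ : 2 ∣ n := by omega
  obtain ⟨x, hpos, hmod3, hmod4, hmod8⟩ : ∃ x : ℤ, 1 ≤ k - 4 * x ^ 2 ∧
      (k - 4 * x ^ 2) % 3 ≠ 1 ∧ (k - 4 * x ^ 2) % 4 ≠ 0 ∧ (k - 4 * x ^ 2) % 8 ≠ 7 := by
    by_cases hk3 : k % 3 = 1
    · by_cases hk8 : k % 8 = 3
      · exact ⟨2, by omega⟩
      · exact ⟨1, by omega⟩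
    · by_cases hk8 : k % 8 = 7
      · exact ⟨3, by omega⟩
      · exact ⟨0, by omega⟩
  refine ⟨x, ?_⟩
  rw [show 2 * k - 8 * x ^ 2 = 2 * (k - 4 * x ^ 2) by ring]
  exact .two_mul hpos hmod3 hmod4 hmod8

theorem exists_isAdmissible_sub_eight_mul_sq {n : ℤ} (hn : 2 ≤ n) :
    ∃ x : ℤ, IsAdmissible (n - 8 * x ^ 2) := by
  rcases lt_or_ge n 65 with hlt | hge
  · exact exists_isAdmissible_sub_mul_sq_of_lt (by norm_num) (by norm_num) hn hlt
  have hmod : n % 4 = 0 ∨ n % 4 = 2 ∨ n % 2 = 1 := by omega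
  rcases hmod with hn4 | hn4 | hn2
  · obtain ⟨m, rfl⟩ : 4 ∣ n := Int.dvd_of_emod_eq_zero hn4
    obtain ⟨x, hx⟩ := exists_isAdmissible_sub_eight_mul_sq (n := m) (by omega)
    refine ⟨2 * x, ?_⟩
    rw [show 4 * m - 8 * (2 * x) ^ 2 = 4 * (m - 8 * x ^ 2) by ring]
    exact hx.four_mul
  · exact exists_isAdmissible_sub_eight_mul_sq_of_emod_four_eq_two hge hn4
  · by_cases hn3 : n % 3 = 2
    · exact ⟨1, .of_odd (by omega) (by omega) (by omega)⟩
    · exact ⟨0, .of_odd (by omega) (by omega) (by omega)⟩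
termination_by n.toNat

theorem exists_isAdmissible_sub_nine_mul_sq {n : ℤ} (hn : 18 ≤ n) :
    ∃ x : ℤ, IsAdmissible (n - 9 * x ^ 2) := by
  by_cases hn3 : n % 3 = 2
  · obtain ⟨b, hb⟩ : ∃ b : ℤ, IsSumThreeSq (n - 18 * b ^ 2) := by
      by_cases hn48 : n % 4 = 0 ∨ n % 8 = 7
      · exact ⟨1, isSumThreeSq_of_emod_ne (by omega) (by omega) (by omega)⟩
      · exact ⟨0, isSumThreeSq_of_emod_ne (by omega) (by omega) (by omega)⟩
    obtain ⟨a, t, x, h, ha, ht⟩ := hb.exists_eq_sq_add_sq_add_nine_mul_sq (by omega)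
    exact ⟨x, a, t, 3 * b, by linear_combination h, ht, fun h => ha h.1⟩
  · rcases Int.emod_two_eq_zero_or_one n with hn2 | hn2
    · exact ⟨1, .of_odd (by omega) (by omega) (by omega)⟩
    · exact ⟨0, .of_odd (by omega) (by omega) (by omega)⟩

theorem universal_case_4_35 :
    ∀ α : ℤ, 5 ≤ α → α ≤ 9 → ∀ N : ℤ, 0 ≤ N →
      ∃ x y z t : ℤ,
        α * x ^ 2 + (3 * y ^ 2 - 2 * y) + 2 * (3 * z ^ 2 - 2 * z) +
          3 * (3 * t ^ 2 - 2 * t) = N := by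
  intro α hα hα' N hN
  obtain ⟨x, hx⟩ : ∃ x : ℤ, IsAdmissible (N + 2 - α * x ^ 2) := by
    rcases lt_or_ge (N + 2) 65 with hlt | hge
    · exact exists_isAdmissible_sub_mul_sq_of_lt hα hα' (by omega) hlt
    interval_cases α
    · exact exists_isAdmissible_sub_mul_sq_of_coprime_six (by omega) (by omega) (by omega)
        (by omega)
    · exact exists_isAdmissible_sub_six_mul_sq (by omega)
    · exact exists_isAdmissible_sub_mul_sq_of_coprime_six (by omega) (by omega) (by omega)
        (by omega)
    · exact exists_isAdmissible_sub_eight_mul_sq (by omega)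
    · exact exists_isAdmissible_sub_nine_mul_sq (by omega)
  rw [add_sub_right_comm] at hx
  obtain ⟨y, z, t, h⟩ := hx.exists_octagonal_sum
  exact ⟨x, y, z, t, by linarith⟩
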